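/- Let X be a real Banach space such that its dual X* contains no subspace isomorphic to ℓ∞. Let M : Σ → cw*k(X*) be a set-valued map defined on a σ-algebra Σ, taking values in the family of convex weak*-compact non-empty subsets of X*, such that the support map s(x,M) is countably additive for every x ∈ X. Then M is a strong multimeasure. -/

import Mathlib

/-!
Fix a disjoint sequence `Aₙ` and put `Cₙ = M(Aₙ)`.

*Unconditional convergence.* For a selection `fₙ ∈ Cₙ` and `x ∈ X` the number `fₙ(x)` lies between
`-s(-x, Cₙ)` and `s(x, Cₙ)`, so `∑ |fₙ(x)| < ∞` for every `x`. If `∑ fₙ` were not unconditionally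
convergent, there would be disjoint finite blocks with sums `yₖ` of norm at least `ε`, still with
`∑ |yₖ(x)| < ∞`. By the uniform boundedness principle `u ↦ ∑ uₖ yₖ` is a bounded operator
`ℓ∞ → X*`, and by Rosenthal's disjointification lemma (`exists_injective_tsum_offDiag_le`) it is
bounded below after passing to a subsequence: testing on unit vectors `xₖ` at which `yₖ` is almost
normed, the off-diagonal terms are small. So `X*` would contain `ℓ∞`
(`containsIsoCopyOfLinfty_of_not_summable`).

*Equality of sets.* The same domination makes the sum map `∏ Cₙ → X*` weak*-continuous, so
`S = ∑ Cₙ` is convex and weak*-compact. Its support function is `∑ s(x, Cₙ) = s(x, M(⋃ Aₙ))`, and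
the Hahn–Banach theorem in the weak* topology gives `S = M(⋃ Aₙ)`.
-/

/-- The series of sets `∑ₙ Cₙ` is unconditionally convergent: every selection is
(unconditionally) summable. -/
def UncondConvSeriesOfSets {X : Type*} [NormedAddCommGroup X] (C : ℕ → Set X) : Prop :=
  ∀ x : ℕ → X, (∀ n, x n ∈ C n) → Summable x

/-- The sum of the series of sets `∑ₙ Cₙ`: the set of all sums of selections. -/
def seriesSumSet {X : Type*} [NormedAddCommGroup X] (C : ℕ → Set X) : Set X :=
  {s | ∃ x : ℕ → X, (∀ n, x n ∈ C n) ∧ HasSum x s}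

/-- A set function on a σ-algebra, with values in a topological abelian monoid, is
countably additive. -/
def CountablyAdditive {Ω E : Type*} [MeasurableSpace Ω] [AddCommMonoid E]
    [TopologicalSpace E] (ν : Set Ω → E) : Prop :=
  ∀ A : ℕ → Set Ω, (∀ n, MeasurableSet (A n)) → Pairwise (Function.onFun Disjoint A) →
    HasSum (fun n => ν (A n)) (ν (⋃ n, A n))

/-- `M` is a strong multimeasure (closures and unconditional convergence taken in the
norm topology). -/
def IsStrongMultimeasure {Ω X : Type*} [MeasurableSpace Ω] [NormedAddCommGroup X]
    (M : Set Ω → Set X) : Prop :=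
  ∀ A : ℕ → Set Ω, (∀ n, MeasurableSet (A n)) → Pairwise (Function.onFun Disjoint A) →
    UncondConvSeriesOfSets (fun n => M (A n)) ∧
    closure (M (⋃ n, A n)) = closure (seriesSumSet fun n => M (A n))

/-- The weak* topology on `X*`: the topology of pointwise convergence on `X`. -/
def weakStarTop (X : Type*) [NormedAddCommGroup X] [NormedSpace ℝ X] :
    TopologicalSpace (X →L[ℝ] ℝ) :=
  TopologicalSpace.induced (fun f : X →L[ℝ] ℝ => fun x : X => f x) Pi.topologicalSpace

/-- `Z` contains a subspace isomorphic to `ℓ∞`. -/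
def ContainsIsoCopyOfLinfty (Z : Type*) [NormedAddCommGroup Z] [NormedSpace ℝ Z] : Prop :=
  ∃ T : lp (fun _ : ℕ => ℝ) ⊤ →L[ℝ] Z, ∃ c : ℝ, 0 < c ∧
    ∀ u : lp (fun _ : ℕ => ℝ) ⊤, c * ‖u‖ ≤ ‖T u‖

open scoped ENNReal

/-- Rosenthal's disjointification lemma for a nonnegative matrix with uniformly bounded
off-diagonal row sums. The bound is `n * δ`, and the proof is by induction on `n`: split `ℕ` into
infinitely many infinite blocks; either some block works, or each block contains a bad row, and
the rows picked in this way have off-diagonal sums smaller by `δ` along one another. -/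
lemma exists_injective_tsum_offDiag_le {δ : ℝ≥0∞} (hδ : δ ≠ ∞) (n : ℕ) :
    ∀ a : ℕ → ℕ → ℝ≥0∞, (∀ k, ∑' j, (if j = k then 0 else a k j) ≤ n * δ) →
      ∃ φ : ℕ → ℕ, Function.Injective φ ∧
        ∀ k, ∑' j, (if j = k then 0 else a (φ k) (φ j)) ≤ δ := by
  induction n with
  | zero =>
    intro a ha
    exact ⟨id, Function.injective_id, fun k => (ha k).trans (by simp)⟩
  | succ n ih =>
    intro a ha
    by_cases h : ∃ p, ∀ m, ∑' j, (if j = m then 0 else a (Nat.pair p m) (Nat.pair p j)) ≤ δ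
    · obtain ⟨p, hp⟩ := h
      exact ⟨Nat.pair p, fun i j hij => (Nat.pair_eq_pair.1 hij).2, hp⟩
    · push Not at h
      choose m hm using h
      have hinj : Function.Injective fun p => Nat.pair p (m p) :=
        fun i j hij => (Nat.pair_eq_pair.1 hij).1
      obtain ⟨φ, hφ, hle⟩ := ih (fun k j => a (Nat.pair k (m k)) (Nat.pair j (m j))) (by
        intro k
        have key : ∑' j, (if j = k then 0 else a (Nat.pair k (m k)) (Nat.pair j (m j))) +
            ∑' j, (if j = m k then 0 else a (Nat.pair k (m k)) (Nat.pair k j)) ≤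
            ∑' j, (if j = Nat.pair k (m k) then 0 else a (Nat.pair k (m k)) j) := by
          -- the chosen indices outside block `k` and the indices inside block `k` are disjoint
          set b : ℕ → ℝ≥0∞ := fun j => if j = Nat.pair k (m k) then 0 else a (Nat.pair k (m k)) j
            with hb
          have h1 : ∑' j, (if j = k then 0 else a (Nat.pair k (m k)) (Nat.pair j (m j))) ≤
              ∑' j, (if (Nat.unpair j).1 = k then 0 else b j) := by
            refine le_trans (le_of_eq ?_) (ENNReal.tsum_comp_le_tsum_of_injective hinj _)
            refine tsum_congr fun j => ?_
            by_cases hj : j = k <;> simp [hb, hj, Nat.pair_eq_pair]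
          have h2 : ∑' j, (if j = m k then 0 else a (Nat.pair k (m k)) (Nat.pair k j)) ≤
              ∑' j, (if (Nat.unpair j).1 = k then b j else 0) := by
            have hinj2 : Function.Injective (Nat.pair k) :=
              fun i j hij => (Nat.pair_eq_pair.1 hij).2
            refine le_trans (le_of_eq ?_) (ENNReal.tsum_comp_le_tsum_of_injective hinj2 _)
            refine tsum_congr fun j => ?_
            by_cases hj : j = m k <;> simp [hb, hj, Nat.pair_eq_pair]
          refine (add_le_add h1 h2).trans (le_of_eq ?_)
          rw [← ENNReal.tsum_add]
          refine tsum_congr fun j => ?_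
          change _ = b j
          split_ifs <;> simp
        have h3 := (add_le_add_right (hm k).le _).trans (key.trans (ha _))
        have h4 : ((n + 1 : ℕ) : ℝ≥0∞) * δ = n * δ + δ := by push_cast; ring
        rw [h4] at h3
        exact (ENNReal.add_le_add_iff_right hδ).1 h3)
      exact ⟨_, hinj.comp hφ, hle⟩

/-- Uniform boundedness principle for pointwise absolutely summable sequences of functionals. -/
lemma exists_tsum_abs_le {X : Type*} [NormedAddCommGroup X] [NormedSpace ℝ X] [CompleteSpace X]
    (y : ℕ → X →L[ℝ] ℝ) (hy : ∀ x, Summable fun k => |y k x|) :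
    ∃ K, 0 ≤ K ∧ ∀ x, ∑' k, |y k x| ≤ K * ‖x‖ := by
  obtain ⟨K, hK⟩ := banach_steinhaus
    (g := fun p : Finset ℕ × (ℕ → SignType) => ∑ k ∈ p.1, ((p.2 k : ℝ)) • y k) (by
      intro x
      refine ⟨∑' k, |y k x|, fun p => ?_⟩
      calc ‖(∑ k ∈ p.1, ((p.2 k : ℝ)) • y k) x‖ = ‖∑ k ∈ p.1, (p.2 k : ℝ) * y k x‖ := by simp
        _ ≤ ∑ k ∈ p.1, |y k x| := by
            refine norm_sum_le_of_le _ fun k _ => ?_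
            rw [Real.norm_eq_abs, abs_mul]
            refine mul_le_of_le_one_left (abs_nonneg _) ?_
            cases p.2 k <;> simp
        _ ≤ ∑' k, |y k x| := (hy x).sum_le_tsum _ fun _ _ => abs_nonneg _)
  refine ⟨K, (norm_nonneg _).trans (hK (∅, 0)), fun x => ?_⟩
  refine (hy x).tsum_le_of_sum_le fun s => ?_
  have h := (∑ k ∈ s, ((SignType.sign (y k x) : ℝ)) • y k).le_of_opNorm_le
    (hK (s, fun k => SignType.sign (y k x))) x
  refine le_trans (le_of_eq ?_) ((le_abs_self _).trans h)
  simp [sign_mul_self]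

/-- The operator `ℓ∞ → X*`, `u ↦ ∑ uₖ yₖ` (weak* sum), attached to a pointwise absolutely summable
sequence of functionals. -/
lemma exists_linfty_operator {X : Type*} [NormedAddCommGroup X] [NormedSpace ℝ X]
    [CompleteSpace X] (y : ℕ → X →L[ℝ] ℝ) (hy : ∀ x, Summable fun k => |y k x|) :
    ∃ T : lp (fun _ : ℕ => ℝ) ⊤ →L[ℝ] (X →L[ℝ] ℝ),
      ∀ u x, HasSum (fun k => u k * y k x) (T u x) := by
  obtain ⟨K, hK0, hK⟩ := exists_tsum_abs_le y hy
  have hle : ∀ (u : lp (fun _ : ℕ => ℝ) ⊤) x k, ‖u k * y k x‖ ≤ ‖u‖ * |y k x| := by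
    intro u x k
    rw [norm_mul]
    exact mul_le_mul_of_nonneg_right (lp.norm_apply_le_norm ENNReal.top_ne_zero u k) (norm_nonneg _)
  have hs : ∀ (u : lp (fun _ : ℕ => ℝ) ⊤) x, Summable fun k => u k * y k x := fun u x =>
    Summable.of_norm_bounded ((hy x).mul_left ‖u‖) (hle u x)
  let B : lp (fun _ : ℕ => ℝ) ⊤ →ₗ[ℝ] X →ₗ[ℝ] ℝ :=
    LinearMap.mk₂ ℝ (fun u x => ∑' k, u k * y k x)
      (fun u v x => by
        rw [← (hs u x).tsum_add (hs v x)]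
        exact tsum_congr fun k => by simp [add_mul])
      (fun c u x => by
        rw [smul_eq_mul, ← tsum_mul_left]
        exact tsum_congr fun k => by simp [mul_assoc])
      (fun u x z => by
        rw [← (hs u x).tsum_add (hs u z)]
        exact tsum_congr fun k => by simp [mul_add])
      (fun c u x => by
        rw [smul_eq_mul, ← tsum_mul_left]
        exact tsum_congr fun k => by simp; ring)
  refine ⟨B.mkContinuous₂ K fun u x => ?_, fun u x => ?_⟩
  · calc ‖∑' k, u k * y k x‖ ≤ ∑' k, ‖u‖ * |y k x| :=
          tsum_of_norm_bounded ((hy x).mul_left ‖u‖).hasSum (hle u x)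
      _ = ‖u‖ * ∑' k, |y k x| := tsum_mul_left
      _ ≤ ‖u‖ * (K * ‖x‖) := mul_le_mul_of_nonneg_left (hK x) (norm_nonneg _)
      _ = K * ‖u‖ * ‖x‖ := by ring
  · exact (hs u x).hasSum

/-- A pointwise absolutely summable sequence of functionals of norms bounded away from zero
produces a copy of `ℓ∞` in the dual. -/
lemma containsIsoCopyOfLinfty_of_le_norm {X : Type*} [NormedAddCommGroup X] [NormedSpace ℝ X]
    [CompleteSpace X] (y : ℕ → X →L[ℝ] ℝ) (hy : ∀ x, Summable fun k => |y k x|)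
    {ε : ℝ} (hε : 0 < ε) (hεy : ∀ k, ε ≤ ‖y k‖) : ContainsIsoCopyOfLinfty (X →L[ℝ] ℝ) := by
  obtain ⟨K, hK0, hK⟩ := exists_tsum_abs_le y hy
  have hx : ∀ k, ∃ x : X, ‖x‖ < 1 ∧ ε / 2 < ‖y k x‖ := fun k =>
    (y k).exists_lt_apply_of_lt_opNorm (by linarith [hεy k])
  choose x hx1 hx2 using hx
  obtain ⟨n, hn⟩ := exists_nat_ge (K / (ε / 4))
  have hn' : K ≤ n * (ε / 4) := (div_le_iff₀ (by positivity)).1 hn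
  obtain ⟨φ, hφ, hφle⟩ := exists_injective_tsum_offDiag_le (δ := ENNReal.ofReal (ε / 4))
    ENNReal.ofReal_ne_top n (fun k j => ENNReal.ofReal |y j (x k)|) (by
      intro k
      calc ∑' j, (if j = k then 0 else ENNReal.ofReal |y j (x k)|)
          ≤ ∑' j, ENNReal.ofReal |y j (x k)| :=
            ENNReal.tsum_le_tsum fun j => by split_ifs <;> simp
        _ = ENNReal.ofReal (∑' j, |y j (x k)|) :=
            (ENNReal.ofReal_tsum_of_nonneg (fun _ => abs_nonneg _) (hy _)).symm
        _ ≤ ENNReal.ofReal (n * (ε / 4)) := by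
            refine ENNReal.ofReal_le_ofReal ((hK _).trans (le_trans ?_ hn'))
            exact mul_le_of_le_one_right hK0 (hx1 k).le
        _ = n * ENNReal.ofReal (ε / 4) := by
            rw [ENNReal.ofReal_mul (Nat.cast_nonneg n), ENNReal.ofReal_natCast])
  obtain ⟨T, hT⟩ := exists_linfty_operator (fun k => y (φ k)) fun x => (hy x).comp_injective hφ
  refine ⟨T, ε / 4, by positivity, fun u => ?_⟩
  have hcoord : ∀ k, ‖u k‖ ≤ (‖T u‖ + ‖u‖ * (ε / 4)) / (ε / 2) := by
    intro k
    rw [le_div_iff₀ (by positivity)]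
    set z := x (φ k) with hz
    have hoffs : Summable fun j => if j = k then 0 else |y (φ j) z| := by
      refine Summable.of_nonneg_of_le (fun j => ?_) (fun j => ?_) ((hy z).comp_injective hφ)
      · split_ifs <;> simp
      · simp only [Function.comp]; split_ifs <;> simp
    have hoff : ∑' j, (if j = k then 0 else |y (φ j) z|) ≤ ε / 4 := by
      rw [← ENNReal.ofReal_le_ofReal_iff (by positivity),
        ENNReal.ofReal_tsum_of_nonneg (fun j => by split_ifs <;> simp) hoffs]
      refine le_trans (le_of_eq (tsum_congr fun j => ?_)) (hφle k)
      split_ifs <;> simp [hz]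
    have hdec : T u z = u k * y (φ k) z + ∑' j, (if j = k then 0 else u j * y (φ j) z) := by
      rw [← (hT u z).tsum_eq]
      exact (hT u z).summable.tsum_eq_add_tsum_ite k
    have hrest : ‖∑' j, (if j = k then 0 else u j * y (φ j) z)‖ ≤ ‖u‖ * (ε / 4) := by
      refine (tsum_of_norm_bounded (hoffs.mul_left ‖u‖).hasSum fun j => ?_).trans ?_
      · split_ifs
        · simp
        · rw [norm_mul]
          exact mul_le_mul_of_nonneg_right (lp.norm_apply_le_norm ENNReal.top_ne_zero u j)
            (norm_nonneg _)
      · rw [tsum_mul_left]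
        exact mul_le_mul_of_nonneg_left hoff (norm_nonneg _)
    have hTz : ‖T u z‖ ≤ ‖T u‖ := by
      refine ((T u).le_opNorm z).trans ?_
      exact mul_le_of_le_one_right (norm_nonneg _) (hx1 _).le
    calc ‖u k‖ * (ε / 2) ≤ ‖u k‖ * ‖y (φ k) z‖ :=
          mul_le_mul_of_nonneg_left (hx2 _).le (norm_nonneg _)
      _ = ‖T u z - ∑' j, (if j = k then 0 else u j * y (φ j) z)‖ := by
          rw [hdec, add_sub_cancel_right, norm_mul]
      _ ≤ ‖T u z‖ + ‖∑' j, (if j = k then 0 else u j * y (φ j) z)‖ := norm_sub_le _ _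
      _ ≤ ‖T u‖ + ‖u‖ * (ε / 4) := add_le_add hTz hrest
  have hu : ‖u‖ ≤ (‖T u‖ + ‖u‖ * (ε / 4)) / (ε / 2) :=
    lp.norm_le_of_forall_le (by positivity) hcoord
  rw [le_div_iff₀ (by positivity)] at hu
  linarith

lemma containsIsoCopyOfLinfty_of_not_summable {X : Type*} [NormedAddCommGroup X]
    [NormedSpace ℝ X] [CompleteSpace X] (f : ℕ → X →L[ℝ] ℝ)
    (hf : ∀ x, Summable fun k => |f k x|) (hns : ¬ Summable f) :
    ContainsIsoCopyOfLinfty (X →L[ℝ] ℝ) := by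
  rw [summable_iff_vanishing_norm] at hns
  push Not at hns
  obtain ⟨ε, hε, h⟩ := hns
  -- disjoint finite blocks whose sums have norm at least `ε`
  have : Std.Symm (Disjoint : Finset ℕ → Finset ℕ → Prop) := ⟨fun _ _ h => h.symm⟩
  obtain ⟨F, hF, hdisj⟩ := exists_seq_of_forall_finset_exists'
    (fun t : Finset ℕ => ε ≤ ‖∑ i ∈ t, f i‖) Disjoint (by
      intro s _
      obtain ⟨t, ht, hεt⟩ := h (s.biUnion id)
      exact ⟨t, hεt, fun r hr => ((Finset.disjoint_biUnion_right _ _ _).1 ht r hr).symm⟩)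
  refine containsIsoCopyOfLinfty_of_le_norm (fun k => ∑ i ∈ F k, f i) (fun x => ?_) hε hF
  refine summable_of_sum_le (c := ∑' k, |f k x|) (fun _ => abs_nonneg _) fun s => ?_
  calc ∑ k ∈ s, |(∑ i ∈ F k, f i) x| ≤ ∑ k ∈ s, ∑ i ∈ F k, |f i x| := by
        refine Finset.sum_le_sum fun k _ => ?_
        rw [sum_apply]
        exact Finset.abs_sum_le_sum_abs _ _
    _ = ∑ i ∈ s.biUnion F, |f i x| :=
        (Finset.sum_biUnion fun i _ j _ hij => hdisj hij).symm
    _ ≤ ∑' k, |f k x| := (hf x).sum_le_tsum _ fun _ _ => abs_nonneg _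

/-- Hahn–Banach separation for weak*-compact convex sets: domination of support functions gives
inclusion. -/
lemma subset_of_forall_exists_le {X : Type*} [NormedAddCommGroup X] [NormedSpace ℝ X]
    {C D : Set (X →L[ℝ] ℝ)} (hC : @IsCompact (X →L[ℝ] ℝ) (weakStarTop X) C) (hconv : Convex ℝ C)
    (h : ∀ x : X, ∀ f ∈ D, ∃ g ∈ C, f x ≤ g x) : D ⊆ C := by
  intro f hf
  by_contra hfC
  let C' : Set (WeakBilin (topDualPairing ℝ X)) := C
  have hC' : IsCompact C' := hC
  have hconv' : Convex ℝ C' := fun a ha b hb p q hp hq hpq => hconv ha hb hp hq hpq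
  have : T2Space (WeakBilin (topDualPairing ℝ X)) :=
    inferInstanceAs (T2Space (WeakDual ℝ X))
  obtain ⟨u, r, hu, hr⟩ := geometric_hahn_banach_closed_point (E := WeakBilin (topDualPairing ℝ X))
    (s := C') (x := f) hconv' hC'.isClosed hfC
  obtain ⟨x, rfl⟩ := LinearMap.dualEmbedding_surjective (topDualPairing ℝ X) u
  obtain ⟨g, hg, hle⟩ := h x f hf
  have h1 : g x < r := hu g hg
  have h2 : r < f x := hr
  linarith

lemma exists_isGreatest_eval {X : Type*} [NormedAddCommGroup X] [NormedSpace ℝ X]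
    {C : Set (X →L[ℝ] ℝ)} (hC : @IsCompact (X →L[ℝ] ℝ) (weakStarTop X) C) (hne : C.Nonempty)
    (x : X) : ∃ g ∈ C, sSup ((fun f : X →L[ℝ] ℝ => f x) '' C) = g x ∧ ∀ f ∈ C, f x ≤ g x := by
  let C' : Set (WeakDual ℝ X) := C
  have hC' : IsCompact C' := hC
  obtain ⟨g, hg, hmax⟩ := hC'.exists_isMaxOn hne (WeakDual.eval_continuous x).continuousOn
  have hmax' : ∀ f ∈ C, f x ≤ (g : X →L[ℝ] ℝ) x := fun f hf => hmax hf
  refine ⟨g, hg, ?_, hmax'⟩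
  refine IsGreatest.csSup_eq ⟨⟨g, hg, rfl⟩, ?_⟩
  rintro _ ⟨f, hf, rfl⟩
  exact hmax' f hf

/-- The sum of a series of weak*-compact sets is weak*-compact when all selections are norm
summable and, for each `x`, the values at `x` are dominated by a summable sequence. -/
lemma isCompact_seriesSumSet {X : Type*} [NormedAddCommGroup X] [NormedSpace ℝ X]
    {C : ℕ → Set (X →L[ℝ] ℝ)} (hC : ∀ n, @IsCompact (X →L[ℝ] ℝ) (weakStarTop X) (C n))
    (hsum : UncondConvSeriesOfSets C) (b : X → ℕ → ℝ) (hb : ∀ x, Summable (b x))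
    (hle : ∀ x n, ∀ f ∈ C n, |f x| ≤ b x n) :
    @IsCompact (X →L[ℝ] ℝ) (weakStarTop X) (seriesSumSet C) := by
  let C' : ℕ → Set (WeakDual ℝ X) := C
  have hP : IsCompact (Set.univ.pi C') := isCompact_univ_pi hC
  -- the sum is taken in the norm topology, not in the weak* topology
  let Ψ : (ℕ → X →L[ℝ] ℝ) → X →L[ℝ] ℝ := fun f => ∑' n, f n
  have hΨ : ∀ f, (∀ n, f n ∈ C n) → ∀ x, ∑' n, f n x = Ψ f x := fun f hf x =>
    ((ContinuousLinearMap.apply ℝ ℝ x).hasSum (hsum f hf).hasSum).tsum_eq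
  let Φ : (ℕ → WeakDual ℝ X) → WeakDual ℝ X := Ψ
  have hΦ : ContinuousOn Φ (Set.univ.pi C') := by
    rw [continuousOn_iff_continuous_domRestrict]
    refine WeakDual.continuous_of_continuous_eval fun x => ?_
    have heq : (fun f : Set.univ.pi C' => (Set.univ.pi C').domRestrict Φ f x) =
        fun f : Set.univ.pi C' => ∑' n, (f : ℕ → WeakDual ℝ X) n x := by
      funext f
      exact (hΨ _ (fun n => f.2 n trivial) x).symm
    rw [heq]
    refine continuous_tsum (fun n => ?_) (hb x) fun n f => hle x n _ (f.2 n trivial)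
    exact (WeakDual.eval_continuous x).comp ((continuous_apply n).comp continuous_subtype_val)
  have himg : Φ '' Set.univ.pi C' = seriesSumSet C := by
    ext s
    constructor
    · rintro ⟨f, hf, rfl⟩
      exact ⟨f, fun n => hf n trivial, (hsum f fun n => hf n trivial).hasSum⟩
    · rintro ⟨f, hf, hs⟩
      exact ⟨f, fun n _ => hf n, hs.tsum_eq⟩
  have := hP.image_of_continuousOn hΦ
  rw [himg] at this
  exact this

lemma convex_seriesSumSet {E : Type*} [NormedAddCommGroup E] [NormedSpace ℝ E]
    {C : ℕ → Set E} (hC : ∀ n, Convex ℝ (C n)) : Convex ℝ (seriesSumSet C) := by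
  rintro s ⟨f, hf, hs⟩ t ⟨g, hg, ht⟩ a b ha hb hab
  exact ⟨fun n => a • f n + b • g n, fun n => hC n (hf n) (hg n) ha hb hab,
    (hs.const_smul a).add (ht.const_smul b)⟩

/-- **Musiał.** Let `X` be a Banach space whose dual `X*` contains no
subspace isomorphic to `ℓ∞`. If `M : Σ → cw*k(X*)` takes convex, weak*-compact,
non-empty values and `s(x, M)` is countably additive for every `x ∈ X`, then `M` is a
strong multimeasure. -/
theorem statement7 {Ω X : Type*} [MeasurableSpace Ω]
    [NormedAddCommGroup X] [NormedSpace ℝ X] [CompleteSpace X]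
    (hX : ¬ ContainsIsoCopyOfLinfty (X →L[ℝ] ℝ))
    (M : Set Ω → Set (X →L[ℝ] ℝ))
    (hne : ∀ A : Set Ω, MeasurableSet A → (M A).Nonempty)
    (hconv : ∀ A : Set Ω, MeasurableSet A → Convex ℝ (M A))
    (hcpt : ∀ A : Set Ω, MeasurableSet A → @IsCompact (X →L[ℝ] ℝ) (weakStarTop X) (M A))
    (hca : ∀ x : X, CountablyAdditive (fun A => sSup ((fun f : X →L[ℝ] ℝ => f x) '' M A))) :
    IsStrongMultimeasure M := by
  intro A hA hdisj
  have hU : MeasurableSet (⋃ n, A n) := MeasurableSet.iUnion hA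
  set s : X → Set Ω → ℝ := fun x B => sSup ((fun f : X →L[ℝ] ℝ => f x) '' M B) with hs
  have hsS : ∀ x, HasSum (fun n => s x (A n)) (s x (⋃ n, A n)) := fun x => hca x A hA hdisj
  have hatt : ∀ B, MeasurableSet B → ∀ x, ∃ g ∈ M B, s x B = g x ∧ ∀ f ∈ M B, f x ≤ g x :=
    fun B hB x => exists_isGreatest_eval (hcpt B hB) (hne B hB) x
  have hle : ∀ B, MeasurableSet B → ∀ x, ∀ f ∈ M B, f x ≤ s x B := by
    intro B hB x f hf
    obtain ⟨g, -, hg, hmax⟩ := hatt B hB x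
    exact hg ▸ hmax f hf
  have hdom : ∀ x n, ∀ f ∈ M (A n), |f x| ≤ |s x (A n)| + |s (-x) (A n)| := by
    intro x n f hf
    have h1 := hle _ (hA n) x f hf
    have h2 := hle _ (hA n) (-x) f hf
    rw [map_neg] at h2
    have h3 := le_abs_self (s x (A n))
    have h4 := le_abs_self (s (-x) (A n))
    have h5 := abs_nonneg (s x (A n))
    have h6 := abs_nonneg (s (-x) (A n))
    exact abs_le.2 ⟨by linarith, by linarith⟩
  have hdoms : ∀ x, Summable fun n => |s x (A n)| + |s (-x) (A n)| := fun x =>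
    (hsS x).summable.abs.add (hsS (-x)).summable.abs
  have hunc : UncondConvSeriesOfSets fun n => M (A n) := by
    intro f hf
    by_contra hns
    exact hX (containsIsoCopyOfLinfty_of_not_summable f (fun x =>
      Summable.of_nonneg_of_le (fun _ => abs_nonneg _) (fun n => hdom x n _ (hf n)) (hdoms x)) hns)
  refine ⟨hunc, congrArg closure (Set.Subset.antisymm ?_ ?_)⟩
  · refine subset_of_forall_exists_le
      (isCompact_seriesSumSet (fun n => hcpt _ (hA n)) hunc _ hdoms hdom)
      (convex_seriesSumSet fun n => hconv _ (hA n)) fun x f hf => ?_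
    choose g hg hgs _ using fun n => hatt _ (hA n) x
    have hsum : HasSum g (∑' n, g n) := (hunc g hg).hasSum
    refine ⟨_, ⟨g, hg, hsum⟩, (hle _ hU x f hf).trans (le_of_eq ?_)⟩
    refine (hsS x).unique ?_
    simp_rw [hgs]
    exact (ContinuousLinearMap.apply ℝ ℝ x).hasSum hsum
  · refine subset_of_forall_exists_le (hcpt _ hU) (hconv _ hU) ?_
    rintro x f ⟨g, hg, hsum⟩
    obtain ⟨k, hk, hks, -⟩ := hatt _ hU x
    refine ⟨k, hk, hks ▸ ?_⟩
    exact hasSum_le (fun n => hle _ (hA n) x _ (hg n))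
      ((ContinuousLinearMap.apply ℝ ℝ x).hasSum hsum) (hsS x)
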